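/- For every γ > 0 and every ε > 0 there exists R₀ > 0 such that for every (ψ₀, θ₀) ∈ ℝ² with 0 < ‖(ψ₀, θ₀)‖ < R₀ one has ‖G(ψ₀, θ₀)‖ > ‖(ψ₀, θ₀)‖, where ‖·‖ is the Euclidean norm. In particular, (0,0) is a repelling equilibrium of the regularized Dirac-GAN dynamics. -/

import Mathlib

/-!
Identify `(ψ, θ)` with `z = ψ + θi`. The update map is then `z ↦ (1 + γεi) z - 4γ (ψ³ + θ³i)`, whose
cubic term does not contribute to the derivative at the origin. That derivative is therefore
multiplication by `1 + γεi`, which scales the norm by `√(1 + (γε)²) > 1`, and a map whose derivative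
at a point expands all vectors uniformly expands distances to that point nearby.
-/

open Filter Topology
open Complex (I)

theorem eventually_norm_sub_lt_of_hasFDerivAt_of_expanding
    {𝕜 E F : Type*} [NontriviallyNormedField 𝕜] [NormedAddCommGroup E] [NormedSpace 𝕜 E]
    [NormedAddCommGroup F] [NormedSpace 𝕜 F] {f : E → F} {f' : E →L[𝕜] F} {a : E} {c : ℝ}
    (hf : HasFDerivAt f f' a) (hc : 1 < c) (hf' : ∀ v, c * ‖v‖ ≤ ‖f' v‖) :
    ∀ᶠ x in 𝓝[≠] a, ‖x - a‖ < ‖f x - f a‖ := by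
  obtain ⟨δ, hδ, hδc⟩ : ∃ δ > 0, 1 < c - δ := ⟨(c - 1) / 2, by linarith, by linarith⟩
  filter_upwards [nhdsWithin_le_nhds (hf.isLittleO.def hδ), self_mem_nhdsWithin] with x hx hxa
  have hpos : 0 < ‖x - a‖ := norm_sub_pos_iff.mpr hxa
  calc
    ‖x - a‖ < (c - δ) * ‖x - a‖ := lt_mul_of_one_lt_left hpos hδc
    _ = c * ‖x - a‖ - δ * ‖x - a‖ := sub_mul ..
    _ ≤ ‖f' (x - a)‖ - ‖f x - f a - f' (x - a)‖ := sub_le_sub (hf' _) hx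
    _ ≤ ‖f x - f a‖ := by
      rw [sub_le_iff_le_add]
      exact norm_le_norm_add_norm_sub _ _

theorem one_lt_norm_one_add_mul_I {t : ℝ} (ht : t ≠ 0) : 1 < ‖(1 + t * I : ℂ)‖ := by
  have h := Complex.norm_add_mul_I 1 t
  rw [Complex.ofReal_one] at h
  rw [h, Real.lt_sqrt zero_le_one]
  simpa using sq_pos_of_ne_zero ht

/-- The update map `G` of the regularized Dirac-GAN, with the parameter pair `(ψ, θ)` encoded as the
complex number `ψ + θi`, so that the Euclidean norm is the modulus. -/
def diracGANUpdate (γ ε : ℝ) (z : ℂ) : ℂ :=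
  (z.re - γ * (4 * z.re ^ 3 + ε * z.im) : ℝ) + (z.im - γ * (4 * z.im ^ 3 - ε * z.re) : ℝ) * I

theorem diracGANUpdate_zero (γ ε : ℝ) : diracGANUpdate γ ε 0 = 0 := by
  simp [diracGANUpdate]

theorem diracGANUpdate_eq_mul_sub (γ ε : ℝ) (z : ℂ) :
    diracGANUpdate γ ε z =
      (1 + (γ * ε : ℝ) * I) * z - 4 * γ * ((z.re : ℂ) ^ 3 + (z.im : ℂ) ^ 3 * I) := by
  apply Complex.ext <;> simp [diracGANUpdate, ← Complex.ofReal_pow] <;> ring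

theorem hasFDerivAt_re_pow_add_im_pow_mul_I_zero {n : ℕ} (hn : 2 ≤ n) :
    HasFDerivAt (fun z : ℂ ↦ (z.re : ℂ) ^ n + (z.im : ℂ) ^ n * I) (0 : ℂ →L[ℝ] ℂ) 0 := by
  have hn1 : n - 1 ≠ 0 := by lia
  have hre := ((Complex.ofRealCLM ∘L Complex.reCLM).hasFDerivAt (x := 0)).pow n
  have him := ((Complex.ofRealCLM ∘L Complex.imCLM).hasFDerivAt (x := 0)).pow n
  simpa [hn1] using hre.fun_add (him.mul_const I)

theorem hasFDerivAt_diracGANUpdate_zero (γ ε : ℝ) :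
    HasFDerivAt (diracGANUpdate γ ε) (ContinuousLinearMap.mul ℝ ℂ (1 + (γ * ε : ℝ) * I)) 0 := by
  have hlinear := (ContinuousLinearMap.mul ℝ ℂ (1 + (γ * ε : ℝ) * I)).hasFDerivAt (x := 0)
  have hcubic := (hasFDerivAt_re_pow_add_im_pow_mul_I_zero (n := 3) (by simp)).const_mul (4 * γ : ℂ)
  rw [smul_zero] at hcubic
  rw [funext (diracGANUpdate_eq_mul_sub γ ε)]
  simpa only [sub_zero, ContinuousLinearMap.mul_apply'] using hlinear.fun_sub hcubic

theorem norm_diracGANUpdate_add_mul_I (γ ε ψ θ : ℝ) :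
    ‖diracGANUpdate γ ε (ψ + θ * I)‖ =
      √((ψ - γ * (4 * ψ ^ 3 + ε * θ)) ^ 2 + (θ - γ * (4 * θ ^ 3 - ε * ψ)) ^ 2) := by
  rw [diracGANUpdate, Complex.norm_add_mul_I]
  simp

theorem eventually_norm_lt_norm_diracGANUpdate {γ ε : ℝ} (hγε : γ * ε ≠ 0) :
    ∀ᶠ z in 𝓝[≠] (0 : ℂ), ‖z‖ < ‖diracGANUpdate γ ε z‖ := by
  simpa [diracGANUpdate_zero] using
    eventually_norm_sub_lt_of_hasFDerivAt_of_expanding (hasFDerivAt_diracGANUpdate_zero γ ε)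
      (one_lt_norm_one_add_mul_I hγε) fun v ↦ (norm_mul _ v).ge

/-- The origin is a repelling equilibrium of the regularized Dirac-GAN update map
`G(ψ, θ) = (ψ − γ(4ψ³ + εθ), θ − γ(4θ³ − εψ))`: near the origin the Euclidean norm
strictly increases under one update step. -/
theorem diracGAN_origin_repelling :
    ∀ γ : ℝ, 0 < γ → ∀ ε : ℝ, 0 < ε → ∃ R₀ > (0 : ℝ),
      ∀ ψ₀ θ₀ : ℝ,
        0 < Real.sqrt (ψ₀ ^ 2 + θ₀ ^ 2) →
        Real.sqrt (ψ₀ ^ 2 + θ₀ ^ 2) < R₀ →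
        Real.sqrt ((ψ₀ - γ * (4 * ψ₀ ^ 3 + ε * θ₀)) ^ 2
            + (θ₀ - γ * (4 * θ₀ ^ 3 - ε * ψ₀)) ^ 2)
          > Real.sqrt (ψ₀ ^ 2 + θ₀ ^ 2) := by
  intro γ hγ ε hε
  obtain ⟨R₀, hR₀, hexpand⟩ := Metric.eventually_nhds_iff.mp <|
    eventually_nhdsWithin_iff.mp (eventually_norm_lt_norm_diracGANUpdate (mul_pos hγ hε).ne')
  refine ⟨R₀, hR₀, fun ψ₀ θ₀ hpos hlt ↦ ?_⟩
  rw [← Complex.norm_add_mul_I] at hpos hlt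
  rw [← Complex.norm_add_mul_I ψ₀ θ₀, ← norm_diracGANUpdate_add_mul_I]
  exact hexpand (by rwa [dist_zero_right]) (norm_pos_iff.mp hpos)
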